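/- For every P ∈ 𝒫(Z), B(P,ℰ) = H(P) − sup_{θ∈ℝ^d}(⟨θ, μ(P)⟩ − Υ(θ)) = H(P) − Υ*(μ(P)). -/

import Mathlib

theorem tangent_pos (b : ℝ → ℝ) (hc : ConvexOn ℝ (Set.Ioi 0) b) (x y b' : ℝ) (hx : 0 < x)
    (hy : 0 < y) (hd : HasDerivAt b b' y) : b y + b' * (x - y) ≤ b x := by
  rcases lt_trichotomy x y with h | h | h
  · have := hc.slope_le_of_hasDerivAt hx hy h hd
    rw [slope_def_field, div_le_iff₀ (by linarith)] at this
    nlinarith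
  · subst h; simp
  · have := hc.le_slope_of_hasDerivAt hy hx h hd
    rw [slope_def_field, le_div_iff₀ (by linarith)] at this
    nlinarith

theorem tangent_nonneg (b : ℝ → ℝ) (hc : ConvexOn ℝ (Set.Ioi 0) b)
    (hb : ContinuousOn b (Set.Ici 0)) (x y b' : ℝ) (hx : 0 ≤ x)
    (hy : 0 < y) (hd : HasDerivAt b b' y) : b y + b' * (x - y) ≤ b x := by
  rcases hx.eq_or_lt with h | h
  · subst h
    have h1 : Filter.Tendsto b (nhdsWithin 0 (Set.Ioi 0)) (nhds (b 0)) :=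
      (hb 0 (by simp)).mono_left (nhdsWithin_mono _ Set.Ioi_subset_Ici_self)
    have h2 : Filter.Tendsto (fun x => b y + b' * (x - y)) (nhdsWithin 0 (Set.Ioi 0))
        (nhds (b y + b' * (0 - y))) := by
      have : Continuous (fun x => b y + b' * (x - y)) := by fun_prop
      exact (this.tendsto 0).mono_left nhdsWithin_le_nhds
    refine le_of_tendsto_of_tendsto h2 h1 ?_
    filter_upwards [self_mem_nhdsWithin] with x hx
    exact tangent_pos b hc x y b' hx hy hd
  · exact tangent_pos b hc x y b' h hy hd

theorem stmt_2 {Z : Type} [Fintype Z] [Nonempty Z] {d : ℕ}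
    (β β' : Z → ℝ → ℝ)
    (hβc : ∀ z, ContinuousOn (β z) (Set.Ici 0))
    (hβsc : ∀ z, StrictConvexOn ℝ (Set.Ioi 0) (β z))
    (hβd : ∀ z x, 0 < x → HasDerivAt (β z) (β' z x) x)
    (hβ'bot : ∀ z, Filter.Tendsto (β' z) (nhdsWithin 0 (Set.Ioi 0)) Filter.atBot)
    (hβ'top : ∀ z, Filter.Tendsto (β' z) Filter.atTop Filter.atTop)
    (e : Z → ℝ → ℝ)
    (he_pos : ∀ z r, 0 < e z r)
    (he_left : ∀ z r, β' z (e z r) = r)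
    (he_right : ∀ z x, 0 < x → e z (β' z x) = x)
    (f : Z → Fin d → ℝ)
    (prob : Set (Z → ℝ))
    (hprob : prob = {P : Z → ℝ | (∀ z, 0 ≤ P z) ∧ (∑ z, P z) = 1})
    (μ : (Z → ℝ) → Fin d → ℝ)
    (hμ : ∀ P i, μ P i = ∑ z, P z * f z i)
    (H : (Z → ℝ) → ℝ)
    (hH : ∀ Q, H Q = ∑ z, β z (Q z))
    (Λ : (Fin d → ℝ) → ℝ)
    (hΛ : ∀ θ, (∑ z, e z ((∑ i, θ i * f z i) - Λ θ)) = 1)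
    (Pθ : (Fin d → ℝ) → Z → ℝ)
    (hPθ : ∀ θ z, Pθ θ z = e z ((∑ i, θ i * f z i) - Λ θ))
    (Bdiv : (Z → ℝ) → (Z → ℝ) → ℝ)
    (hBdiv : ∀ P Q, Bdiv P Q = ∑ z, (β z (P z) - β z (Q z) - β' z (Q z) * (P z - Q z)))
    (BE : (Z → ℝ) → ℝ)
    (hBE : ∀ P, BE P = ⨅ θ, Bdiv P (Pθ θ))
    (βstar : Z → ℝ → ℝ)
    (hβstar : ∀ z t, βstar z t = sSup ((fun x => t * x - β z x) '' Set.Ioi 0))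
    (Υ : (Fin d → ℝ) → ℝ)
    (hΥ : ∀ θ, Υ θ = Λ θ + ∑ z, βstar z ((∑ i, θ i * f z i) - Λ θ))
    (Υstar : (Fin d → ℝ) → ℝ)
    (hΥstar : ∀ m : Fin d → ℝ, Υstar m = sSup (Set.range fun θ : Fin d → ℝ => (∑ i, θ i * m i) - Υ θ)) :
    ∀ P ∈ prob,
      BE P = H P - sSup (Set.range fun θ : Fin d → ℝ => (∑ i, θ i * μ P i) - Υ θ) ∧
      BE P = H P - Υstar (μ P) := by
  intro P hP
  rw [hΥstar, and_self]
  rw [hprob] at hP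
  obtain ⟨hP0, hP1⟩ := hP
  have hs : ∀ z t, βstar z t = t * e z t - β z (e z t) := by
    intro z t
    rw [hβstar]
    refine IsGreatest.csSup_eq ⟨⟨e z t, he_pos z t, rfl⟩, ?_⟩
    rintro _ ⟨x, hx, rfl⟩
    have := tangent_pos (β z) (hβsc z).convexOn x (e z t) _ hx (he_pos z t)
      (hβd z _ (he_pos z t))
    rw [he_left] at this
    simp only
    linarith
  have key : ∀ θ, Bdiv P (Pθ θ) = H P - ((∑ i, θ i * μ P i) - Υ θ) := by
    intro θ
    have h1 : (∑ i, θ i * μ P i) = ∑ z, (∑ i, θ i * f z i) * P z := by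
      simp only [hμ, Finset.mul_sum, Finset.sum_mul]
      rw [Finset.sum_comm]
      exact Finset.sum_congr rfl fun z _ => Finset.sum_congr rfl fun i _ => by ring
    have h2 : Λ θ = ∑ z, Λ θ * P z := by rw [← Finset.mul_sum, hP1, mul_one]
    rw [hΥ, h1, hBdiv, hH]
    nth_rewrite 1 [h2]
    rw [← Finset.sum_add_distrib, ← Finset.sum_sub_distrib, ← Finset.sum_sub_distrib]
    refine Finset.sum_congr rfl fun z _ => ?_
    rw [hPθ, he_left, hs]
    ring
  have hnn : ∀ θ, 0 ≤ Bdiv P (Pθ θ) := by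
    intro θ
    rw [hBdiv]
    refine Finset.sum_nonneg fun z _ => ?_
    have hp : 0 < Pθ θ z := by rw [hPθ]; exact he_pos _ _
    have := tangent_nonneg (β z) (hβsc z).convexOn (hβc z) (P z) (Pθ θ z) _ (hP0 z) hp
      (hβd z _ hp)
    linarith
  have hbdd : BddAbove (Set.range fun θ : Fin d → ℝ => (∑ i, θ i * μ P i) - Υ θ) := by
    refine ⟨H P, ?_⟩
    rintro _ ⟨θ, rfl⟩
    have := hnn θ
    rw [key] at this
    simp only
    linarith
  rw [hBE]
  refine IsGLB.ciInf_eq ⟨?_, ?_⟩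
  · rintro _ ⟨θ, rfl⟩
    have := le_csSup hbdd ⟨θ, rfl⟩
    simp only [key] at this ⊢
    linarith
  · intro c hc
    have : sSup (Set.range fun θ : Fin d → ℝ => (∑ i, θ i * μ P i) - Υ θ) ≤ H P - c := by
      refine csSup_le (Set.range_nonempty _) ?_
      rintro _ ⟨θ, rfl⟩
      have := hc ⟨θ, rfl⟩
      simp only [key] at this ⊢
      linarith
    linarith
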